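/- arXiv:1508.06123 — 6 statements merged into one kernel-verified Lean document; each statement's English description precedes it below -/
import Mathlib

section
/- Fix k ∈ ℤ. For every continuously differentiable u: ℝ → ℝ of topological charge k with ∫₀¹ sin(u(x)) dx = 0 and ∫₀¹ cos(u(x)) dx > 0, there exists a unique pair (v, n) with n ∈ ℤ and v: ℝ → ℝ continuous, 1-periodic, ∫₀¹ v = kπ and ∫₀¹ exp(2i(∂ₓ⁻¹v)(x)) dx ≠ 0, such that u(x) = 2(∂ₓ⁻¹v)(x) + c_sg(v) + 2πn for all x, where c_sg(v) is taken with arg valued in (−π, π]; moreover v = u′/2. Conversely, for every such v the function 2∂ₓ⁻¹v + c_sg(v) is continuously differentiable of topological charge k with ∫₀¹ sin = 0 and ∫₀¹ cos > 0. -/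
open MeasureTheory Real intervalIntegral

/-- The mean-zero antiderivative of a (continuous, 1-periodic, mean-zero) function:
`(∂ₓ⁻¹ f)(x) = ∫₀ˣ f(s) ds − ∫₀¹ ∫₀ʸ f(s) ds dy`. -/
noncomputable def pInv (f : ℝ → ℝ) (x : ℝ) : ℝ :=
  (∫ s in (0:ℝ)..x, f s) - ∫ y in (0:ℝ)..1, ∫ s in (0:ℝ)..y, f s

/-- Extension of `∂ₓ⁻¹` to a 1-periodic `v` of mean `a = ∫₀¹ v`:
`(∂ₓ⁻¹ v)(x) = (∂ₓ⁻¹ (v − a))(x) + a·x`. -/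
noncomputable def pInvG (v : ℝ → ℝ) (x : ℝ) : ℝ :=
  pInv (fun s => v s - ∫ t in (0:ℝ)..1, v t) x + (∫ t in (0:ℝ)..1, v t) * x

/-- `K_{sg}(v) = ∫₀¹ exp (2 i (∂ₓ⁻¹ v)(x)) dx`. -/
noncomputable def Ksg (v : ℝ → ℝ) : ℂ :=
  ∫ x in (0:ℝ)..1, Complex.exp (2 * (pInvG v x : ℂ) * Complex.I)

/-- `c_sg(v) = - arg (∫₀¹ exp (2 i (∂ₓ⁻¹ v)(x)) dx)`, with `arg` valued in `(-π, π]`. -/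
noncomputable def cSg (v : ℝ → ℝ) : ℝ := - (Ksg v).arg

/-! Every `C¹` function is `u = 2 ∂ₓ⁻¹v + c` with `v = u' / 2` and a constant `c`, and `u` has
charge `k` exactly when `v` is 1-periodic of mean `kπ`. Since
`∫₀¹ cos u + i ∫₀¹ sin u = exp (i c) ∫₀¹ exp (2 i ∂ₓ⁻¹v)`, the conditions on `∫₀¹ sin u` and
`∫₀¹ cos u` say that the rotation by `c` takes `K_sg(v)` to the positive real axis, that is,
`K_sg(v) ≠ 0` and `c ≡ -arg K_sg(v) = c_sg(v)` modulo `2π`. -/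

theorem sin_eq_zero_and_cos_pos_iff {x : ℝ} :
    Real.sin x = 0 ∧ 0 < Real.cos x ↔ ∃ n : ℤ, x = 2 * π * n := by
  have cos_one_iff : Real.sin x = 0 ∧ 0 < Real.cos x ↔ Real.cos x = 1 := by
    refine ⟨fun h => ?_, fun h => ⟨Real.sin_eq_zero_iff_cos_eq.2 (.inl h), h ▸ one_pos⟩⟩
    exact (Real.sin_eq_zero_iff_cos_eq.1 h.1).resolve_right fun hneg => by linarith [h.2]
  rw [cos_one_iff, Real.cos_eq_one_iff]
  simp only [mul_comm (2 * π), eq_comm]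

theorem im_cexp_mul_eq_zero_and_re_pos_iff {θ : ℝ} {z : ℂ} :
    (Complex.exp (θ * Complex.I) * z).im = 0 ∧ 0 < (Complex.exp (θ * Complex.I) * z).re ↔
      z ≠ 0 ∧ ∃ n : ℤ, θ = -z.arg + 2 * π * n := by
  have polar : Complex.exp (θ * Complex.I) * z
      = (‖z‖ : ℂ) * Complex.exp ((θ + z.arg : ℝ) * Complex.I) := by
    conv_lhs => rw [← Complex.norm_mul_exp_arg_mul_I z]
    rw [mul_left_comm, ← Complex.exp_add, ← add_mul, Complex.ofReal_add]
  rw [polar, Complex.im_ofReal_mul, Complex.re_ofReal_mul, Complex.exp_ofReal_mul_I_im,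
    Complex.exp_ofReal_mul_I_re]
  rcases eq_or_ne z 0 with rfl | hz
  · simp
  · simp only [mul_eq_zero, norm_eq_zero, hz, false_or, mul_pos_iff_of_pos_left (norm_pos_iff.2 hz),
      sin_eq_zero_and_cos_pos_iff, ne_eq, not_false_eq_true, true_and, eq_neg_add_iff_add_eq,
      add_comm z.arg]

section IntegralExp

variable {f : ℝ → ℝ} {a b : ℝ}

theorem intervalIntegrable_cexp_ofReal_mul_I (hf : ContinuousOn f (Set.uIcc a b)) :
    IntervalIntegrable (fun x => Complex.exp (f x * Complex.I)) volume a b :=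
  ContinuousOn.intervalIntegrable (by fun_prop)

theorem re_integral_cexp_ofReal_mul_I (hf : ContinuousOn f (Set.uIcc a b)) :
    (∫ x in a..b, Complex.exp (f x * Complex.I)).re = ∫ x in a..b, Real.cos (f x) := by
  simpa only [Complex.reCLM_apply, Complex.exp_ofReal_mul_I_re] using
    (Complex.reCLM.intervalIntegral_comp_comm (intervalIntegrable_cexp_ofReal_mul_I hf)).symm

theorem im_integral_cexp_ofReal_mul_I (hf : ContinuousOn f (Set.uIcc a b)) :
    (∫ x in a..b, Complex.exp (f x * Complex.I)).im = ∫ x in a..b, Real.sin (f x) := by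
  simpa only [Complex.imCLM_apply, Complex.exp_ofReal_mul_I_im] using
    (Complex.imCLM.intervalIntegral_comp_comm (intervalIntegrable_cexp_ofReal_mul_I hf)).symm

end IntegralExp

section Antiderivative

variable {u v : ℝ → ℝ}

theorem pInvG_eq_integral_add {x : ℝ} (hv : IntervalIntegrable v volume 0 x) :
    pInvG v x = (∫ s in (0:ℝ)..x, v s) + pInvG v 0 := by
  simp only [pInvG, pInv, intervalIntegral.integral_sub hv intervalIntegrable_const,
    intervalIntegral.integral_const, integral_same, smul_eq_mul]
  ring

theorem hasDerivAt_pInvG (hv : Continuous v) (x : ℝ) : HasDerivAt (pInvG v) (v x) x := by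
  have eq_integral_add : pInvG v = fun y => (∫ s in (0:ℝ)..y, v s) + pInvG v 0 :=
    funext fun y => pInvG_eq_integral_add (hv.intervalIntegrable 0 y)
  rw [eq_integral_add]
  exact (hv.integral_hasStrictDerivAt 0 x).hasDerivAt.add_const _

theorem contDiff_one_pInvG (hv : Continuous v) : ContDiff ℝ 1 (pInvG v) := by
  have deriv_eq : deriv (pInvG v) = v := funext fun x => (hasDerivAt_pInvG hv x).deriv
  exact contDiff_one_iff_deriv.2
    ⟨fun x => (hasDerivAt_pInvG hv x).differentiableAt, deriv_eq.symm ▸ hv⟩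

theorem integral_eq_pInvG_sub (hv : Continuous v) (x y : ℝ) :
    ∫ s in x..y, v s = pInvG v y - pInvG v x :=
  integral_eq_sub_of_hasDerivAt (fun s _ => hasDerivAt_pInvG hv s) (hv.intervalIntegrable x y)

theorem pInvG_add_eq_add_const_iff (hv : Continuous v) {T a : ℝ} :
    (∀ x, pInvG v (x + T) = pInvG v x + a) ↔
      Function.Periodic v T ∧ ∫ x in (0:ℝ)..T, v x = a := by
  constructor
  · refine fun h => ⟨fun x => ?_, ?_⟩
    · have hshift : HasDerivAt (fun y => pInvG v (y + T)) (v (x + T)) x :=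
        (hasDerivAt_pInvG hv (x + T)).comp_add_const x T
      have hadd : HasDerivAt (fun y => pInvG v y + a) (v x) x :=
        (hasDerivAt_pInvG hv x).add_const a
      exact hshift.unique (funext h ▸ hadd)
    · rw [integral_eq_pInvG_sub hv, ← zero_add T, h 0, add_sub_cancel_left]
  · rintro ⟨hper, rfl⟩ x
    rw [← sub_eq_iff_eq_add', ← integral_eq_pInvG_sub hv, hper.intervalIntegral_add_eq x 0,
      zero_add]

theorem eq_deriv_div_two_of_eq_two_mul_pInvG_add (hv : Continuous v) {c : ℝ}
    (hu : ∀ x, u x = 2 * pInvG v x + c) : v = fun x => deriv u x / 2 := by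
  funext x
  have hderiv : HasDerivAt u (2 * v x) x :=
    funext hu ▸ ((hasDerivAt_pInvG hv x).const_mul 2).add_const c
  rw [hderiv.deriv, mul_div_cancel_left₀ _ two_ne_zero]

theorem exists_eq_two_mul_pInvG_add (hu : ContDiff ℝ 1 u) :
    ∃ v, Continuous v ∧ ∃ c, ∀ x, u x = 2 * pInvG v x + c := by
  have hv : Continuous fun x => deriv u x / 2 := (hu.continuous_deriv le_rfl).div_const 2
  refine ⟨_, hv, u 0 - 2 * pInvG (fun x => deriv u x / 2) 0, fun x => ?_⟩
  have two_mul_integral : 2 * ∫ s in (0:ℝ)..x, deriv u s / 2 = u x - u 0 := by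
    rw [intervalIntegral.integral_div, mul_div_cancel₀ _ two_ne_zero, integral_deriv_eq_sub
      (fun y _ => hu.differentiable one_ne_zero y)
      ((hu.continuous_deriv le_rfl).intervalIntegrable 0 x)]
  rw [integral_eq_pInvG_sub hv] at two_mul_integral
  linarith

end Antiderivative

section Parametrization

variable {v : ℝ → ℝ} {c : ℝ}

theorem two_mul_pInvG_add_charge_iff (hv : Continuous v) {k : ℤ} :
    (∀ x, 2 * pInvG v (x + 1) + c = 2 * pInvG v x + c + 2 * π * k) ↔
      Function.Periodic v 1 ∧ ∫ x in (0:ℝ)..1, v x = k * π := by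
  rw [← pInvG_add_eq_add_const_iff hv]
  refine forall_congr' fun x => ⟨fun h => ?_, fun h => ?_⟩ <;> linarith

theorem integral_cexp_two_mul_pInvG_add (v : ℝ → ℝ) (c : ℝ) :
    ∫ x in (0:ℝ)..1, Complex.exp ((2 * pInvG v x + c : ℝ) * Complex.I)
      = Complex.exp (c * Complex.I) * Ksg v := by
  rw [Ksg, ← intervalIntegral.integral_const_mul]
  refine integral_congr fun x _ => ?_
  rw [← Complex.exp_add]
  push_cast
  ring_nf

theorem integral_sin_eq_zero_and_integral_cos_pos_iff (hv : Continuous v) :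
    (∫ x in (0:ℝ)..1, Real.sin (2 * pInvG v x + c)) = 0 ∧
        0 < (∫ x in (0:ℝ)..1, Real.cos (2 * pInvG v x + c)) ↔
      Ksg v ≠ 0 ∧ ∃ n : ℤ, c = cSg v + 2 * π * n := by
  have hcont : Continuous fun x => 2 * pInvG v x + c :=
    ((contDiff_one_pInvG hv).continuous.const_mul 2).add_const c
  rw [← re_integral_cexp_ofReal_mul_I hcont.continuousOn,
    ← im_integral_cexp_ofReal_mul_I hcont.continuousOn, integral_cexp_two_mul_pInvG_add]
  exact im_cexp_mul_eq_zero_and_re_pos_iff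

theorem pair_eq_of_two_mul_pInvG_add_eq {w : ℝ → ℝ} (hv : Continuous v) (hw : Continuous w)
    {m n : ℤ} (h : ∀ x, 2 * pInvG v x + cSg v + 2 * π * m = 2 * pInvG w x + cSg w + 2 * π * n) :
    (v, m) = (w, n) := by
  obtain rfl : v = w :=
    (eq_deriv_div_two_of_eq_two_mul_pInvG_add hv fun x => add_assoc _ _ _).trans
      (eq_deriv_div_two_of_eq_two_mul_pInvG_add hw fun x => (h x).trans (add_assoc _ _ _)).symm
  have hmn : (m : ℝ) = n := mul_left_cancel₀ two_pi_pos.ne' (add_left_cancel (h 0))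
  rw [Int.cast_injective hmn]

end Parametrization

/-- parametrization of the branch `P⁺` of charge-`k` functions `u` with
`∫₀¹ sin u = 0` and `∫₀¹ cos u > 0` by `v = u'/2` via `u = 2 ∂ₓ⁻¹v + c_sg(v) (mod 2π)`,
together with the converse. -/
theorem psiSgPlus_parametrization (k : ℤ) :
    (∀ u : ℝ → ℝ, ContDiff ℝ 1 u → (∀ x, u (x + 1) = u x + 2 * π * k) →
      (∫ x in (0:ℝ)..1, Real.sin (u x)) = 0 →
      0 < (∫ x in (0:ℝ)..1, Real.cos (u x)) →
      (∃! p : (ℝ → ℝ) × ℤ,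
        Continuous p.1 ∧ Function.Periodic p.1 1 ∧
        (∫ x in (0:ℝ)..1, p.1 x) = k * π ∧ Ksg p.1 ≠ 0 ∧
        ∀ x, u x = 2 * pInvG p.1 x + cSg p.1 + 2 * π * p.2) ∧
      (∀ p : (ℝ → ℝ) × ℤ,
        (Continuous p.1 ∧ Function.Periodic p.1 1 ∧
          (∫ x in (0:ℝ)..1, p.1 x) = k * π ∧ Ksg p.1 ≠ 0 ∧
          ∀ x, u x = 2 * pInvG p.1 x + cSg p.1 + 2 * π * p.2) →
        p.1 = fun x => deriv u x / 2)) ∧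
    (∀ v : ℝ → ℝ, Continuous v → Function.Periodic v 1 →
      (∫ x in (0:ℝ)..1, v x) = k * π → Ksg v ≠ 0 →
      ContDiff ℝ 1 (fun x => 2 * pInvG v x + cSg v) ∧
      (∀ x, 2 * pInvG v (x + 1) + cSg v = (2 * pInvG v x + cSg v) + 2 * π * k) ∧
      (∫ x in (0:ℝ)..1, Real.sin (2 * pInvG v x + cSg v)) = 0 ∧
      0 < ∫ x in (0:ℝ)..1, Real.cos (2 * pInvG v x + cSg v)) := by
  refine ⟨fun u hu hcharge hsin hcos => ⟨?_, ?_⟩, fun v hv hper hmean hK => ⟨?_, ?_, ?_⟩⟩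
  · obtain ⟨v, hv, c, huv⟩ := exists_eq_two_mul_pInvG_add hu
    simp only [huv] at hcharge hsin hcos
    obtain ⟨hper, hmean⟩ := (two_mul_pInvG_add_charge_iff hv).1 hcharge
    obtain ⟨hK, n, rfl⟩ := (integral_sin_eq_zero_and_integral_cos_pos_iff hv).1 ⟨hsin, hcos⟩
    have hrep : ∀ x, u x = 2 * pInvG v x + cSg v + 2 * π * n := fun x =>
      (huv x).trans (add_assoc _ _ _).symm
    refine ⟨(v, n), ⟨hv, hper, hmean, hK, hrep⟩, fun ⟨w, m⟩ ⟨hw, _, _, _, hrep'⟩ => ?_⟩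
    exact pair_eq_of_two_mul_pInvG_add_eq hw hv fun x => (hrep' x).symm.trans (hrep x)
  · rintro ⟨v, n⟩ ⟨hv, -, -, -, hrep⟩
    exact eq_deriv_div_two_of_eq_two_mul_pInvG_add hv fun x => (hrep x).trans (add_assoc _ _ _)
  · exact ((contDiff_one_pInvG hv).const_smul (2 : ℝ)).add contDiff_const
  · exact (two_mul_pInvG_add_charge_iff hv).2 ⟨hper, hmean⟩
  · exact (integral_sin_eq_zero_and_integral_cos_pos_iff hv).2 ⟨hK, 0, by simp⟩
end

section
/- Fix k ∈ ℤ and let u: ℝ → ℝ be continuous of topological charge k with ∫₀¹ exp(i u(x)) dx = 0. Then the ℝ-linear map sending a continuous 1-periodic h: ℝ → ℝ to ∫₀¹ exp(i u(x)) h(x) dx ∈ ℂ is surjective onto ℂ; that is, for every z ∈ ℂ there exists a continuous 1-periodic h with ∫₀¹ exp(i u(x)) h(x) dx = z. -/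
open MeasureTheory Real intervalIntegral

/-!
For a continuous curve `γ` in a finite-dimensional space, the range of `h ↦ ∫ h • γ` is exactly the
span of the values of `γ`: a linear functional `f` vanishing on the range vanishes at
`∫ (f ∘ γ) • γ`, so `∫ (f ∘ γ) ^ 2 = 0` and `f` vanishes on the values of `γ`. For `γ = exp (i u)`
with `u` continuous and nonconstant these values span `ℂ`, because they include two points of the
unit circle whose arguments differ by an angle in `(0, π)`. Finally, `u` cannot be constant if
`∫ exp (i u) = 0`.
-/

section WeightedIntegral

variable {X E : Type*} [TopologicalSpace X] [CompactSpace X] [MeasurableSpace X]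
  [OpensMeasurableSpace X] [NormedAddCommGroup E] [NormedSpace ℝ E]

theorem integrable_continuousMap_smul (μ : Measure X) [IsFiniteMeasureOnCompacts μ]
    (γ : C(X, E)) (h : C(X, ℝ)) : Integrable (fun x ↦ h x • γ x) μ :=
  (h.continuous.smul γ.continuous).integrable_of_hasCompactSupport (.of_compactSpace _)

/-- The real-linear map sending a continuous weight `h` to the vector `∫ h • γ ∂μ`. When
`γ = exp (i u)` on the circle it is, up to the factor `i`, the differential of `u ↦ ∫ exp (i u)`. -/
noncomputable def weightedIntegral (μ : Measure X) [IsFiniteMeasureOnCompacts μ] (γ : C(X, E)) :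
    C(X, ℝ) →ₗ[ℝ] E where
  toFun h := ∫ x, h x • γ x ∂μ
  map_add' g h := by
    simp only [ContinuousMap.add_apply, add_smul]
    exact integral_add (integrable_continuousMap_smul μ γ g) (integrable_continuousMap_smul μ γ h)
  map_smul' c h := by
    simp only [ContinuousMap.smul_apply, smul_assoc, RingHom.id_apply]
    exact integral_smul c _

theorem weightedIntegral_apply (μ : Measure X) [IsFiniteMeasureOnCompacts μ] (γ : C(X, E))
    (h : C(X, ℝ)) : weightedIntegral μ γ h = ∫ x, h x • γ x ∂μ :=
  rfl

theorem apply_weightedIntegral [CompleteSpace E] (μ : Measure X) [IsFiniteMeasureOnCompacts μ]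
    (γ : C(X, E)) (f : E →L[ℝ] ℝ) (h : C(X, ℝ)) :
    f (weightedIntegral μ γ h) = ∫ x, h x * f (γ x) ∂μ := by
  simp only [weightedIntegral_apply, ← smul_eq_mul, ← map_smul]
  exact (f.integral_comp_comm (integrable_continuousMap_smul μ γ h)).symm

theorem forall_apply_weightedIntegral_eq_zero_iff [CompleteSpace E] (μ : Measure X)
    [IsFiniteMeasureOnCompacts μ] [μ.IsOpenPosMeasure] (γ : C(X, E)) (f : E →L[ℝ] ℝ) :
    (∀ h, f (weightedIntegral μ γ h) = 0) ↔ ∀ x, f (γ x) = 0 := by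
  refine ⟨fun hf x ↦ ?_, fun hf h ↦ ?_⟩
  · let g : C(X, ℝ) := ⟨fun x ↦ f (γ x), by fun_prop⟩
    have hsq : ∫ x, g x * g x ∂μ = 0 := (apply_weightedIntegral μ γ f g).symm.trans (hf g)
    have hae : (fun x ↦ g x * g x) =ᵐ[μ] 0 :=
      (integral_eq_zero_iff_of_nonneg (fun x ↦ mul_self_nonneg (g x))
        (integrable_continuousMap_smul μ g g)).mp hsq
    have hzero : (fun x ↦ g x * g x) = 0 :=
      (Continuous.ae_eq_iff_eq μ (by fun_prop) continuous_zero).mp hae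
    exact mul_self_eq_zero.mp (congrFun hzero x)
  · simp only [apply_weightedIntegral, hf, mul_zero, integral_zero]

theorem range_weightedIntegral [FiniteDimensional ℝ E] (μ : Measure X)
    [IsFiniteMeasureOnCompacts μ] [μ.IsOpenPosMeasure] (γ : C(X, E)) :
    LinearMap.range (weightedIntegral μ γ) = Submodule.span ℝ (Set.range γ) := by
  have : CompleteSpace E := FiniteDimensional.complete ℝ E
  rw [← Subspace.dualAnnihilator_inj]
  ext f
  have hf := forall_apply_weightedIntegral_eq_zero_iff μ γ (LinearMap.toContinuousLinearMap f)
  rw [← SetLike.mem_coe (p := (Submodule.span ℝ _).dualAnnihilator),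
    Submodule.coe_dualAnnihilator_span, Submodule.mem_dualAnnihilator]
  simpa [Set.range_subset_iff] using hf

end WeightedIntegral

theorem exists_continuous_periodic_intervalIntegral_smul_eq {E : Type*} [NormedAddCommGroup E]
    [NormedSpace ℝ E] [FiniteDimensional ℝ E] {T : ℝ} (hT : 0 < T) {γ : ℝ → E}
    (hγ : Continuous γ) (hper : Function.Periodic γ T)
    {z : E} (hz : z ∈ Submodule.span ℝ (Set.range γ)) :
    ∃ h : ℝ → ℝ, Continuous h ∧ Function.Periodic h T ∧ ∫ x in (0 : ℝ)..T, h x • γ x = z := by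
  have : Fact (0 < T) := ⟨hT⟩
  let Γ : C(AddCircle T, E) := ⟨hper.lift, continuous_coinduced_dom.mpr hγ⟩
  have hrange : Set.range γ = Set.range Γ := QuotientAddGroup.mk_surjective.range_comp Γ
  rw [hrange, ← range_weightedIntegral volume Γ] at hz
  obtain ⟨h, rfl⟩ := hz
  refine ⟨fun x ↦ h x, h.continuous.comp (AddCircle.continuous_mk' T),
    fun x ↦ congrArg h (AddCircle.coe_add_period T x), ?_⟩
  have hlift := AddCircle.intervalIntegral_preimage T 0 fun x ↦ h x • Γ x
  rwa [zero_add] at hlift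

theorem span_pair_eq_top_of_im_conj_mul_ne_zero {a b : ℂ}
    (hab : (starRingEnd ℂ a * b).im ≠ 0) : Submodule.span ℝ {a, b} = ⊤ := by
  refine Submodule.eq_top_iff'.mpr fun z ↦ ?_
  have cramer : (starRingEnd ℂ z * b).im • a + (starRingEnd ℂ a * z).im • b =
      (starRingEnd ℂ a * b).im • z := by
    apply Complex.ext <;>
      simp only [Complex.add_re, Complex.add_im, Complex.smul_re, Complex.smul_im, smul_eq_mul,
        Complex.mul_im, Complex.conj_re, Complex.conj_im] <;>
      ring
  exact (Submodule.smul_mem_iff _ hab).mp (Submodule.mem_span_pair.mpr ⟨_, _, cramer⟩)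

theorem im_conj_exp_mul_exp (s t : ℝ) :
    (starRingEnd ℂ (Complex.exp (s * Complex.I)) * Complex.exp (t * Complex.I)).im =
      sin (t - s) := by
  simp only [Complex.mul_im, Complex.conj_re, Complex.conj_im, Complex.exp_ofReal_mul_I_re,
    Complex.exp_ofReal_mul_I_im, sin_sub]
  ring

theorem exists_sub_mem_Ioo_of_nonconstant {X : Type*} [TopologicalSpace X] [PreconnectedSpace X]
    {u : X → ℝ} (hu : Continuous u) (hne : ∃ x y, u x ≠ u y) {δ : ℝ} (hδ : 0 < δ) :
    ∃ x y, u y - u x ∈ Set.Ioo 0 δ := by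
  obtain ⟨x, y, hlt⟩ : ∃ x y, u x < u y := by
    obtain ⟨x, y, hxy⟩ := hne
    exact hxy.lt_or_gt.elim (fun h ↦ ⟨x, y, h⟩) fun h ↦ ⟨y, x, h⟩
  obtain ⟨t, hxt, ht⟩ := exists_between (lt_min hlt (lt_add_of_pos_right (u x) hδ))
  obtain ⟨hty, htδ⟩ := lt_min_iff.mp ht
  obtain ⟨w, rfl⟩ := mem_range_of_exists_le_of_exists_ge hu ⟨x, hxt.le⟩ ⟨y, hty.le⟩
  exact ⟨x, w, sub_pos.mpr hxt, sub_lt_iff_lt_add'.mpr htδ⟩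

theorem span_range_exp_mul_I_eq_top {X : Type*} [TopologicalSpace X] [PreconnectedSpace X]
    {u : X → ℝ} (hu : Continuous u) (hne : ∃ x y, u x ≠ u y) :
    Submodule.span ℝ (Set.range fun x ↦ Complex.exp ((u x : ℂ) * Complex.I)) = ⊤ := by
  obtain ⟨x, y, hpos, hlt⟩ := exists_sub_mem_Ioo_of_nonconstant hu hne pi_pos
  have hpair : Submodule.span ℝ
      {Complex.exp ((u x : ℂ) * Complex.I), Complex.exp ((u y : ℂ) * Complex.I)} = ⊤ := by
    apply span_pair_eq_top_of_im_conj_mul_ne_zero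
    rw [im_conj_exp_mul_exp]
    exact (sin_pos_of_pos_of_lt_pi hpos hlt).ne'
  refine top_le_iff.mp (hpair.ge.trans (Submodule.span_mono ?_))
  exact Set.pair_subset (Set.mem_range_self x) (Set.mem_range_self y)

theorem periodic_exp_mul_I_of_charge {T : ℝ} {k : ℤ} {u : ℝ → ℝ}
    (hch : ∀ x, u (x + T) = u x + 2 * π * k) :
    Function.Periodic (fun x ↦ Complex.exp ((u x : ℂ) * Complex.I)) T := fun x ↦
  Complex.exp_eq_exp_iff_exists_int.mpr ⟨k, by rw [hch]; push_cast; ring⟩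

theorem exists_ne_of_intervalIntegral_exp_mul_I_eq_zero {a b : ℝ} (hab : a ≠ b) {u : ℝ → ℝ}
    (hK : ∫ x in a..b, Complex.exp ((u x : ℂ) * Complex.I) = 0) : ∃ x y, u x ≠ u y := by
  by_contra! hconst
  simp only [hconst _ a, intervalIntegral.integral_const, smul_eq_zero, sub_eq_zero, hab.symm,
    Complex.exp_ne_zero, or_self] at hK

theorem differential_K_surjective_on_Sing_general (k : ℤ) (u : ℝ → ℝ) (hu : Continuous u)
    (hch : ∀ x, u (x + 1) = u x + 2 * π * k) (hne : ∃ x y, u x ≠ u y) :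
    ∀ z : ℂ, ∃ h : ℝ → ℝ, Continuous h ∧ Function.Periodic h 1 ∧
      (∫ x in (0 : ℝ)..1, Complex.exp ((u x : ℂ) * Complex.I) * (h x : ℂ)) = z := by
  intro z
  have hz : z ∈ Submodule.span ℝ (Set.range fun x ↦ Complex.exp ((u x : ℂ) * Complex.I)) := by
    rw [span_range_exp_mul_I_eq_top hu hne]
    exact Submodule.mem_top
  obtain ⟨h, hcont, hper, hint⟩ := exists_continuous_periodic_intervalIntegral_smul_eq one_pos
    (by fun_prop) (periodic_exp_mul_I_of_charge hch) hz
  refine ⟨h, hcont, hper, ?_⟩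
  simpa only [Complex.real_smul, mul_comm] using hint

/-- if `u` is continuous of topological charge `k` with
`∫₀¹ exp(i u) dx = 0`, then `h ↦ ∫₀¹ exp(i u x) h x dx` is surjective from continuous
1-periodic real functions onto `ℂ`. -/
theorem differential_K_surjective_on_Sing (k : ℤ) (u : ℝ → ℝ) (hu : Continuous u)
    (hch : ∀ x, u (x + 1) = u x + 2 * π * k)
    (hK : (∫ x in (0:ℝ)..1, Complex.exp ((u x : ℂ) * Complex.I)) = 0) :
    ∀ z : ℂ, ∃ h : ℝ → ℝ, Continuous h ∧ Function.Periodic h 1 ∧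
      (∫ x in (0:ℝ)..1, Complex.exp ((u x : ℂ) * Complex.I) * (h x : ℂ)) = z :=
  differential_K_surjective_on_Sing_general k u hu hch
    (exists_ne_of_intervalIntegral_exp_mul_I_eq_zero zero_ne_one hK)
end

section
/- Fix k ∈ ℤ and let u: ℝ → ℝ be continuous of topological charge k with ∫₀¹ exp(i u(x)) dx = 0 (equivalently ∫₀¹ sin(u) = 0 and ∫₀¹ cos(u) = 0). Then the oscillation of u on [0,1] is at least π: sup_{0 ≤ x, y ≤ 1} |u(x) − u(y)| ≥ π. -/
open MeasureTheory Real intervalIntegral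

/-!
If `θ` takes values in an interval of length less than `π` with midpoint `c`, then
`cos (θ - c)` is positive, so `exp (iθ)` lies in the open half-plane around the direction
`exp (ic)`. Its integral lies there too, and so does not vanish.
-/

section ExpIntegral

variable {X : Type*} [MeasurableSpace X] {μ : Measure X} {θ : X → ℝ}

theorem re_exp_neg_mul_I_mul_exp_mul_I (c t : ℝ) :
    (Complex.exp (-c * Complex.I) * Complex.exp (t * Complex.I)).re = cos (t - c) := by
  rw [← Complex.exp_add, ← Complex.exp_ofReal_mul_I_re]
  congr 2
  push_cast
  ring

theorem integrable_cos_sub (hθ : Integrable (fun x ↦ Complex.exp (θ x * Complex.I)) μ) (c : ℝ) :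
    Integrable (fun x ↦ cos (θ x - c)) μ := by
  simpa only [RCLike.re_to_complex, re_exp_neg_mul_I_mul_exp_mul_I] using
    (hθ.const_mul (Complex.exp (-c * Complex.I))).re

theorem integral_cos_sub_eq_re (hθ : Integrable (fun x ↦ Complex.exp (θ x * Complex.I)) μ) (c : ℝ) :
    ∫ x, cos (θ x - c) ∂μ =
      (Complex.exp (-c * Complex.I) * ∫ x, Complex.exp (θ x * Complex.I) ∂μ).re := by
  simpa only [RCLike.re_to_complex, re_exp_neg_mul_I_mul_exp_mul_I,
    MeasureTheory.integral_const_mul] using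
    integral_re (hθ.const_mul (Complex.exp (-c * Complex.I)))

theorem integral_exp_mul_I_ne_zero {m M : ℝ} (hμ : μ ≠ 0)
    (hθ : Integrable (fun x ↦ Complex.exp (θ x * Complex.I)) μ)
    (hmem : ∀ᵐ x ∂μ, θ x ∈ Set.Icc m M) (hlt : M - m < π) :
    ∫ x, Complex.exp (θ x * Complex.I) ∂μ ≠ 0 := by
  intro hzero
  set c := (m + M) / 2 with hc
  have hpos : ∀ᵐ x ∂μ, 0 < cos (θ x - c) := by
    filter_upwards [hmem] with x ⟨hm, hM⟩
    exact cos_pos_of_mem_Ioo ⟨by linarith, by linarith⟩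
  have hcos : ∫ x, cos (θ x - c) ∂μ = 0 := by
    rw [integral_cos_sub_eq_re hθ, hzero, mul_zero, Complex.zero_re]
  have hvanish : ∀ᵐ x ∂μ, cos (θ x - c) = 0 :=
    (integral_eq_zero_iff_of_nonneg_ae (hpos.mono fun _ ↦ le_of_lt)
      (integrable_cos_sub hθ c)).mp hcos
  have : NeZero μ := ⟨hμ⟩
  obtain ⟨x, hx, hx'⟩ := (hpos.and hvanish).exists
  exact hx.ne' hx'

end ExpIntegral

theorem sSup_dist_eq_diam_image {X Y : Type*} [PseudoMetricSpace Y] {f : X → Y} {s : Set X}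
    (hf : Bornology.IsBounded (f '' s)) :
    sSup {d : ℝ | ∃ x ∈ s, ∃ y ∈ s, d = dist (f x) (f y)} = Metric.diam (f '' s) := by
  have hub : ∀ d ∈ {d : ℝ | ∃ x ∈ s, ∃ y ∈ s, d = dist (f x) (f y)},
      d ≤ Metric.diam (f '' s) := by
    rintro _ ⟨x, hx, y, hy, rfl⟩
    exact Metric.dist_le_diam_of_mem hf (Set.mem_image_of_mem f hx) (Set.mem_image_of_mem f hy)
  apply le_antisymm (Real.sSup_le hub Metric.diam_nonneg)
  apply Metric.diam_le_of_forall_dist_le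
  · apply Real.sSup_nonneg
    rintro _ ⟨x, -, y, -, rfl⟩
    exact dist_nonneg
  · rintro _ ⟨x, hx, rfl⟩ _ ⟨y, hy, rfl⟩
    exact le_csSup ⟨_, hub⟩ ⟨x, hx, y, hy, rfl⟩

theorem oscillation_on_Sing_general {X : Type*} [MeasurableSpace X] {μ : Measure X} {s : Set X}
    {u : X → ℝ} (hμ : μ ≠ 0) (hs : ∀ᵐ x ∂μ, x ∈ s) (hbdd : Bornology.IsBounded (u '' s))
    (hu : Integrable (fun x ↦ Complex.exp (u x * Complex.I)) μ)
    (hzero : ∫ x, Complex.exp (u x * Complex.I) ∂μ = 0) :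
    π ≤ sSup {d : ℝ | ∃ x ∈ s, ∃ y ∈ s, d = |u x - u y|} := by
  simp_rw [← Real.dist_eq, sSup_dist_eq_diam_image hbdd, Real.diam_eq hbdd]
  by_contra! hlt
  have hmem : ∀ᵐ x ∂μ, u x ∈ Set.Icc (sInf (u '' s)) (sSup (u '' s)) :=
    hs.mono fun x hx ↦ hbdd.subset_Icc_sInf_sSup (Set.mem_image_of_mem u hx)
  exact integral_exp_mul_I_ne_zero hμ hu hmem hlt hzero

/-- if `u` is continuous of topological charge `k` with
`∫₀¹ exp(i u x) dx = 0`, then the oscillation of `u` on `[0,1]` is at least `π`. -/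
theorem oscillation_on_Sing (k : ℤ) (u : ℝ → ℝ) (hu : Continuous u)
    (hch : ∀ x, u (x + 1) = u x + 2 * π * k)
    (hK : (∫ x in (0:ℝ)..1, Complex.exp ((u x : ℂ) * Complex.I)) = 0) :
    π ≤ sSup {d : ℝ | ∃ x ∈ Set.Icc (0:ℝ) 1, ∃ y ∈ Set.Icc (0:ℝ) 1, d = |u x - u y|} := by
  rw [integral_of_le zero_le_one, ← integral_Icc_eq_integral_Ioc] at hK
  exact oscillation_on_Sing_general (by simp) (ae_restrict_mem measurableSet_Icc)
    (isCompact_Icc.image hu).isBounded (by fun_prop : Continuous _).integrableOn_Icc hK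
end

section
/- Fix k ∈ ℤ, let I ⊆ ℝ be an open interval, and let u: ℝ × I → ℝ be twice continuously differentiable with u(x+1,t) = u(x,t) + 2πk for all x ∈ ℝ, t ∈ I, satisfying the sine-Gordon equation ∂ₓ∂ₜu(x,t) = sin(u(x,t)) for all x,t. Then for every t ∈ I: (a) ∫₀¹ sin(u(x,t)) dx = 0; and (b) with m(t) := ∫₀¹ u(x,t) dx, the function m is differentiable and K₁(u(·,t)) + m′(t) · ∫₀¹ cos(u(x,t)) dx = 0. -/
/-!
Write `v = ∂ₜu` and `m(t) = ∫₀¹ u(x,t) dx`, so that the equation reads `∂ₓv = f(u)` with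
`f = sin`. Since `u(1,·) - u(0,·)` is constant, `v(1,t) = v(0,t)`, and hence `∫₀¹ f(u) dx = 0`.
Moreover `v` is a primitive of `f(u)` with mean `m'(t)`, so `∂ₓ⁻¹(f(u)) = v - m'(t)`.
Differentiating `∫₀¹ f(u) dx = 0` in `t` gives `∫₀¹ f'(u) v dx = 0`; substituting
`v = ∂ₓ⁻¹(f(u)) + m'(t)` yields the constraint.
-/

open MeasureTheory Real intervalIntegral

/-- `K₁(u) = ∫₀¹ cos (u x) · (∂ₓ⁻¹ (sin ∘ u))(x) dx`. -/
noncomputable def K1 (u : ℝ → ℝ) : ℝ :=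
  ∫ x in (0:ℝ)..1, Real.cos (u x) * pInv (fun y => Real.sin (u y)) x

open scoped Topology

section PartialDerivative

variable {𝕜 E F : Type*} [NontriviallyNormedField 𝕜] [NormedAddCommGroup E] [NormedSpace 𝕜 E]
  [NormedAddCommGroup F] [NormedSpace 𝕜 F] {u : E → 𝕜 → F}

theorem hasDerivAt_right_of_differentiableAt_uncurry {x : E} {t : 𝕜}
    (hu : DifferentiableAt 𝕜 (Function.uncurry u) (x, t)) :
    HasDerivAt (u x) (fderiv 𝕜 (Function.uncurry u) (x, t) (0, 1)) t :=
  hu.hasFDerivAt.comp_hasDerivAt t ((hasDerivAt_const t x).prodMk (hasDerivAt_id t))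

theorem hasDerivAt_deriv_right_of_contDiffOn {n : WithTop ℕ∞} {U : Set (E × 𝕜)} (hU : IsOpen U)
    (hu : ContDiffOn 𝕜 n (Function.uncurry u) U) (hn : n ≠ 0) {x : E} {t : 𝕜} (hxt : (x, t) ∈ U) :
    HasDerivAt (u x) (deriv (u x) t) t :=
  (hasDerivAt_right_of_differentiableAt_uncurry
    ((hu.differentiableOn hn).differentiableAt (hU.mem_nhds hxt))).differentiableAt.hasDerivAt

theorem contDiffOn_uncurry_deriv_right {m n : WithTop ℕ∞} {U : Set (E × 𝕜)} (hU : IsOpen U)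
    (hu : ContDiffOn 𝕜 n (Function.uncurry u) U) (hmn : m + 1 ≤ n) :
    ContDiffOn 𝕜 m (Function.uncurry fun x t => deriv (u x) t) U := by
  have hn : n ≠ 0 := by
    rintro rfl
    simp at hmn
  refine ((hu.fderiv_of_isOpen hU hmn).clm_apply (contDiffOn_const (c := (0, 1)))).congr ?_
  rintro ⟨x, t⟩ hxt
  exact (hasDerivAt_right_of_differentiableAt_uncurry
    ((hu.differentiableOn hn).differentiableAt (hU.mem_nhds hxt))).deriv

theorem differentiableAt_deriv_of_contDiffOn_two {U : Set (E × 𝕜)} (hU : IsOpen U)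
    (hu : ContDiffOn 𝕜 2 (Function.uncurry u) U) {x : E} {t : 𝕜} (hxt : (x, t) ∈ U) :
    DifferentiableAt 𝕜 (fun y => deriv (u y) t) x := by
  have hv : DifferentiableAt 𝕜 (Function.uncurry fun y s => deriv (u y) s) (x, t) :=
    ((contDiffOn_uncurry_deriv_right hU hu one_add_one_eq_two.le).contDiffAt
      (hU.mem_nhds hxt)).differentiableAt one_ne_zero
  exact hv.comp x (f := fun y => (y, t)) (differentiableAt_id.prodMk (differentiableAt_const t))

end PartialDerivative

theorem hasDerivAt_integral_of_continuousOn_uncurry {E : Type*} [NormedAddCommGroup E]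
    [NormedSpace ℝ E] {a b t : ℝ} {I : Set ℝ} {F F' : ℝ → ℝ → E} (hI : I ∈ 𝓝 t)
    (hF : ∀ s ∈ I, ContinuousOn (fun x => F x s) (Set.uIcc a b))
    (hF' : ContinuousOn (Function.uncurry F') (Set.uIcc a b ×ˢ I))
    (hd : ∀ x ∈ Set.uIcc a b, ∀ s ∈ I, HasDerivAt (F x) (F' x s) s) :
    HasDerivAt (fun s => ∫ x in a..b, F x s) (∫ x in a..b, F' x t) t := by
  have ht : t ∈ I := mem_of_mem_nhds hI
  obtain ⟨ε, hε, hball⟩ := Metric.nhds_basis_closedBall.mem_iff.1 hI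
  obtain ⟨C, hC⟩ := (isCompact_uIcc.prod (isCompact_closedBall t ε)).exists_bound_of_continuousOn
    (hF'.mono (Set.prod_mono subset_rfl hball))
  refine (hasDerivAt_integral_of_dominated_loc_of_deriv_le
    (F := fun s x => F x s) (F' := fun s x => F' x s) (bound := fun _ => C)
    (Metric.closedBall_mem_nhds t hε) ?_ (hF t ht).intervalIntegrable ?_ ?_
    intervalIntegrable_const ?_).2
  · filter_upwards [hI] with s hs
    exact (hF s hs).intervalIntegrable.def'.aestronglyMeasurable
  · exact (hF'.uncurry_right t ht).intervalIntegrable.def'.aestronglyMeasurable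
  · exact .of_forall fun x hx s hs => hC (x, s) ⟨Set.uIoc_subset_uIcc hx, hs⟩
  · exact .of_forall fun x hx s hs => hd x (Set.uIoc_subset_uIcc hx) s (hball hs)

theorem hasDerivAt_integral_of_contDiffOn_uncurry {E : Type*} [NormedAddCommGroup E]
    [NormedSpace ℝ E] {a b t : ℝ} {I : Set ℝ} {U : Set (ℝ × ℝ)} {F : ℝ → ℝ → E} (hI : I ∈ 𝓝 t)
    (hU : IsOpen U) (hIU : Set.uIcc a b ×ˢ I ⊆ U) (hF : ContDiffOn ℝ 1 (Function.uncurry F) U) :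
    HasDerivAt (fun s => ∫ x in a..b, F x s) (∫ x in a..b, deriv (F x) t) t :=
  hasDerivAt_integral_of_continuousOn_uncurry hI
    (fun s hs => (hF.continuousOn.mono hIU).uncurry_right s hs)
    ((contDiffOn_uncurry_deriv_right (m := 0) hU hF (by simp)).continuousOn.mono hIU)
    fun _ hx _ hs => hasDerivAt_deriv_right_of_contDiffOn hU hF one_ne_zero (hIU ⟨hx, hs⟩)

section MeanZeroPrimitive

variable {f V : ℝ → ℝ}

theorem pInv_eq_sub_integral (hV : ∀ x, HasDerivAt V (f x) x)
    (hf : ∀ x, IntervalIntegrable f volume 0 x) (x : ℝ) :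
    pInv f x = V x - ∫ y in (0:ℝ)..1, V y := by
  have hVint : IntervalIntegrable V volume 0 1 :=
    (continuous_iff_continuousAt.2 fun y => (hV y).continuousAt).intervalIntegrable 0 1
  have primitive (y : ℝ) : ∫ s in (0:ℝ)..y, f s = V y - V 0 :=
    integral_eq_sub_of_hasDerivAt (fun s _ => hV s) (hf y)
  simp only [pInv, primitive]
  rw [integral_sub hVint intervalIntegrable_const, intervalIntegral.integral_const]
  simp

theorem integral_mul_pInv_add {g : ℝ → ℝ} (hV : ∀ x, HasDerivAt V (f x) x)
    (hf : ∀ x, IntervalIntegrable f volume 0 x) (hg : IntervalIntegrable g volume 0 1) :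
    (∫ x in (0:ℝ)..1, g x * pInv f x) + (∫ x in (0:ℝ)..1, V x) * (∫ x in (0:ℝ)..1, g x) =
      ∫ x in (0:ℝ)..1, g x * V x := by
  have hVcont : Continuous V := continuous_iff_continuousAt.2 fun x => (hV x).continuousAt
  simp only [pInv_eq_sub_integral hV hf, mul_sub]
  rw [integral_sub (hg.mul_continuousOn hVcont.continuousOn) (hg.mul_const _),
    intervalIntegral.integral_mul_const]
  ring

end MeanZeroPrimitive

theorem integral_deriv_comp_mul_deriv_eq_zero {a b c t : ℝ} {I : Set ℝ} {U : Set (ℝ × ℝ)}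
    {f : ℝ → ℝ} {u : ℝ → ℝ → ℝ} (hI : I ∈ 𝓝 t) (hU : IsOpen U) (hIU : Set.uIcc a b ×ˢ I ⊆ U)
    (hf : ContDiff ℝ 1 f) (hu : ContDiffOn ℝ 1 (Function.uncurry u) U)
    (hconst : ∀ s ∈ I, ∫ x in a..b, f (u x s) = c) :
    ∫ x in a..b, deriv f (u x t) * deriv (u x) t = 0 := by
  have leibniz : HasDerivAt (fun s => ∫ x in a..b, f (u x s))
      (∫ x in a..b, deriv (fun s => f (u x s)) t) t :=
    hasDerivAt_integral_of_contDiffOn_uncurry hI hU hIU (hf.comp_contDiffOn hu)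
  have chain_rule : ∀ x ∈ Set.uIcc a b,
      deriv (fun s => f (u x s)) t = deriv f (u x t) * deriv (u x) t := fun x hx =>
    deriv_comp t (hf.differentiable one_ne_zero _) (hasDerivAt_deriv_right_of_contDiffOn hU hu
      one_ne_zero (hIU ⟨hx, mem_of_mem_nhds hI⟩)).differentiableAt
  rw [← integral_congr chain_rule]
  exact leibniz.unique ((hasDerivAt_const t c).congr_of_eventuallyEq
    (Filter.eventually_of_mem hI hconst))

theorem constraint_on_solutions_general {c : ℝ} {I : Set ℝ} (hI : IsOpen I) {f : ℝ → ℝ}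
    (hf : ContDiff ℝ 1 f) {u : ℝ → ℝ → ℝ}
    (hu : ContDiffOn ℝ 1 (Function.uncurry u) (Set.univ ×ˢ I))
    (hc : ∀ t ∈ I, u 1 t = u 0 t + c)
    (hpde : ∀ x, ∀ t ∈ I, HasDerivAt (fun x' => deriv (u x') t) (f (u x t)) x) :
    ∀ t ∈ I,
      (∫ x in (0:ℝ)..1, f (u x t)) = 0 ∧
      DifferentiableAt ℝ (fun t' => ∫ x in (0:ℝ)..1, u x t') t ∧
      (∫ x in (0:ℝ)..1, deriv f (u x t) * pInv (fun y => f (u y t)) x)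
        + deriv (fun t' => ∫ x in (0:ℝ)..1, u x t') t
          * (∫ x in (0:ℝ)..1, deriv f (u x t)) = 0 := by
  have hU : IsOpen (Set.univ ×ˢ I : Set (ℝ × ℝ)) := isOpen_univ.prod hI
  have hIU : Set.uIcc (0:ℝ) 1 ×ˢ I ⊆ Set.univ ×ˢ I := Set.prod_mono_left (Set.subset_univ _)
  have hu_slice (t : ℝ) (ht : t ∈ I) : Continuous fun x => u x t :=
    continuousOn_univ.1 (hu.continuousOn.uncurry_right t ht)
  have hfu_int (t : ℝ) (ht : t ∈ I) (x : ℝ) : IntervalIntegrable (fun x => f (u x t)) volume 0 x :=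
    (hf.continuous.comp (hu_slice t ht)).intervalIntegrable 0 x
  have velocity_endpoints (t : ℝ) (ht : t ∈ I) : deriv (u 1) t = deriv (u 0) t :=
    (Filter.eventuallyEq_of_mem (hI.mem_nhds ht) hc).deriv_eq.trans (deriv_add_const c)
  have integral_eq_zero (t : ℝ) (ht : t ∈ I) : ∫ x in (0:ℝ)..1, f (u x t) = 0 := by
    rw [integral_eq_sub_of_hasDerivAt (fun x _ => hpde x t ht) (hfu_int t ht 1),
      velocity_endpoints t ht, sub_self]
  intro t ht
  have mean_hasDerivAt :
      HasDerivAt (fun t' => ∫ x in (0:ℝ)..1, u x t') (∫ x in (0:ℝ)..1, deriv (u x) t) t :=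
    hasDerivAt_integral_of_contDiffOn_uncurry (hI.mem_nhds ht) hU hIU hu
  have hf'u_int : IntervalIntegrable (fun x => deriv f (u x t)) volume 0 1 :=
    ((hf.continuous_deriv le_rfl).comp (hu_slice t ht)).intervalIntegrable 0 1
  refine ⟨integral_eq_zero t ht, mean_hasDerivAt.differentiableAt, ?_⟩
  rw [mean_hasDerivAt.deriv,
    integral_mul_pInv_add (fun x => hpde x t ht) (hfu_int t ht) hf'u_int]
  exact integral_deriv_comp_mul_deriv_eq_zero (hI.mem_nhds ht) hU hIU hf hu integral_eq_zero

/-- for a classical charge-`k` solution of sine-Gordon on `ℝ × I`, `I` an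
open interval, one has `∫₀¹ sin (u x t) dx = 0` for all `t ∈ I`, the mean
`m(t) = ∫₀¹ u x t dx` is differentiable, and `K₁(u(·,t)) + m'(t)·∫₀¹ cos (u x t) dx = 0`. -/
theorem constraint_on_solutions (k : ℤ) (I : Set ℝ) (hIopen : IsOpen I)
    (hIconn : I.OrdConnected) (u : ℝ → ℝ → ℝ)
    (hreg : ContDiffOn ℝ 2 (Function.uncurry u) (Set.univ ×ˢ I))
    (hch : ∀ x : ℝ, ∀ t ∈ I, u (x + 1) t = u x t + 2 * π * k)
    (hpde : ∀ x : ℝ, ∀ t ∈ I,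
      deriv (fun x' => deriv (fun t' => u x' t') t) x = Real.sin (u x t)) :
    ∀ t ∈ I,
      (∫ x in (0:ℝ)..1, Real.sin (u x t)) = 0 ∧
      DifferentiableAt ℝ (fun t' => ∫ x in (0:ℝ)..1, u x t') t ∧
      K1 (fun x => u x t)
        + deriv (fun t' => ∫ x in (0:ℝ)..1, u x t') t
          * (∫ x in (0:ℝ)..1, Real.cos (u x t)) = 0 := by
  simpa only [K1, Real.deriv_sin] using constraint_on_solutions_general hIopen contDiff_sin
    (hreg.of_le one_le_two) (fun t ht => by simpa only [zero_add] using hch 0 t ht)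
    fun x t ht => hpde x t ht ▸ (differentiableAt_deriv_of_contDiffOn_two
      (isOpen_univ.prod hIopen) hreg ⟨trivial, ht⟩).hasDerivAt
end

section
/- Fix k ∈ ℤ and T > 0. Let u: ℝ × [0,T) → ℝ be such that u and its partial derivatives ∂ₓu, ∂ₜu, ∂ₓ∂ₜu, ∂ₜ∂ₓu exist and are continuous (derivatives in t one-sided at t = 0), with ∂ₓ∂ₜu = ∂ₜ∂ₓu, u(x+1,t) = u(x,t) + 2πk for all x,t, and ∂ₓ∂ₜu(x,t) = sin(u(x,t)) for all x,t. If the initial datum u₀ := u(·,0) satisfies ∫₀¹ cos(u₀(x)) dx = 0, then K₁(u₀) = 0. -/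
open MeasureTheory Real intervalIntegral

/-- A classical solution of the sine-Gordon equation of topological charge `k` on
`ℝ × [0,T)`: `u` together with its partial derivatives `∂ₓu`, `∂ₜu`, `∂ₓ∂ₜu`, `∂ₜ∂ₓu`
(the `t`-derivatives taken one-sided at `t = 0`, i.e. within `[0,T)`) exist and are
continuous, the mixed partial derivatives agree, `u(x+1,t) = u(x,t) + 2πk`, and
`∂ₓ∂ₜu = sin u`. -/
def IsSGSolution (k : ℤ) (T : ℝ) (u : ℝ → ℝ → ℝ) : Prop :=
  ∃ ux ut uxt utx : ℝ → ℝ → ℝ,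
    ContinuousOn (fun p : ℝ × ℝ => u p.1 p.2) (Set.univ ×ˢ Set.Ico 0 T) ∧
    (∀ x : ℝ, ∀ t ∈ Set.Ico (0:ℝ) T, HasDerivAt (fun x' => u x' t) (ux x t) x) ∧
    ContinuousOn (fun p : ℝ × ℝ => ux p.1 p.2) (Set.univ ×ˢ Set.Ico 0 T) ∧
    (∀ x : ℝ, ∀ t ∈ Set.Ico (0:ℝ) T,
      HasDerivWithinAt (fun t' => u x t') (ut x t) (Set.Ico 0 T) t) ∧
    ContinuousOn (fun p : ℝ × ℝ => ut p.1 p.2) (Set.univ ×ˢ Set.Ico 0 T) ∧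
    (∀ x : ℝ, ∀ t ∈ Set.Ico (0:ℝ) T, HasDerivAt (fun x' => ut x' t) (uxt x t) x) ∧
    ContinuousOn (fun p : ℝ × ℝ => uxt p.1 p.2) (Set.univ ×ˢ Set.Ico 0 T) ∧
    (∀ x : ℝ, ∀ t ∈ Set.Ico (0:ℝ) T,
      HasDerivWithinAt (fun t' => ux x t') (utx x t) (Set.Ico 0 T) t) ∧
    ContinuousOn (fun p : ℝ × ℝ => utx p.1 p.2) (Set.univ ×ˢ Set.Ico 0 T) ∧
    (∀ x : ℝ, ∀ t ∈ Set.Ico (0:ℝ) T, uxt x t = utx x t) ∧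
    (∀ x : ℝ, ∀ t ∈ Set.Ico (0:ℝ) T, u (x + 1) t = u x t + 2 * π * k) ∧
    (∀ x : ℝ, ∀ t ∈ Set.Ico (0:ℝ) T, uxt x t = Real.sin (u x t))

/-!
`K₁` is linear in the antiderivative of `sin u`, and a change of antiderivative only adds a multiple
of `∫ cos u`. The equation provides the antiderivative `∂ₜu`, so that
`K₁(u) = ∫ (cos u · ∂ₜu) - (∫ cos u) (∫ ∂ₜu)`. The first integral is the time derivative of
`∫ sin u`, and `∫ sin u = ∫ ∂ₓ∂ₜu` vanishes at all times because `∂ₜu` is periodic. Hence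
`K₁(u) = -(∫ cos u) (∫ ∂ₜu)`.
-/

section Calculus

open Filter Topology

variable {E : Type*} [NormedAddCommGroup E] [NormedSpace ℝ E] {S : Set ℝ} {t₀ : ℝ}

theorem hasDerivWithinAt_unique_of_eq_add_const {f g : ℝ → E} {f' g' c : E}
    (hS : UniqueDiffWithinAt ℝ S t₀) (ht₀ : t₀ ∈ S) (hf : HasDerivWithinAt f f' S t₀)
    (hg : HasDerivWithinAt g g' S t₀) (hfg : ∀ t ∈ S, f t = g t + c) : f' = g' :=
  hS.eq_deriv S hf ((hg.add_const c).congr hfg (hfg t₀ ht₀))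

theorem eventually_forall_norm_sub_sub_smul_le_of_isCompact {α : Type*} [TopologicalSpace α]
    {K : Set α} {F F' : α → ℝ → E} (hK : IsCompact K) (hS : Convex ℝ S) (ht₀ : t₀ ∈ S)
    (hF : ∀ x ∈ K, ∀ t ∈ S, HasDerivWithinAt (F x) (F' x t) S t)
    (hF' : ContinuousOn (fun p : α × ℝ => F' p.1 p.2) (K ×ˢ S)) {ε : ℝ} (hε : 0 < ε) :
    ∀ᶠ t in 𝓝[S] t₀, ∀ x ∈ K,
      ‖F x t - F x t₀ - (t - t₀) • F' x t₀‖ ≤ ε * ‖t - t₀‖ := by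
  have hF'_swap : ContinuousOn (Function.uncurry fun t x => F' x t) (S ×ˢ K) :=
    hF'.comp continuous_swap.continuousOn fun _ hp => ⟨hp.2, hp.1⟩
  obtain ⟨V, hV, hF'_near⟩ :=
    hK.mem_uniformity_of_prod hF'_swap ht₀ (Metric.dist_mem_uniformity hε)
  obtain ⟨δ, hδ, hball⟩ := Metric.mem_nhdsWithin_iff.1 hV
  have hconvex : Convex ℝ (Metric.ball t₀ δ ∩ S) := (convex_ball t₀ δ).inter hS
  filter_upwards [inter_mem (mem_nhdsWithin_of_mem_nhds (Metric.ball_mem_nhds t₀ hδ))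
    self_mem_nhdsWithin] with t ht x hx
  have hderiv : ∀ s ∈ Metric.ball t₀ δ ∩ S, HasDerivWithinAt
      (fun r => F x r - r • F' x t₀) (F' x s - F' x t₀) (Metric.ball t₀ δ ∩ S) s := fun s hs => by
    simpa only [id_eq, one_smul] using
      ((hF x hx s hs.2).mono Set.inter_subset_right).fun_sub
        ((hasDerivWithinAt_id s _).smul_const (F' x t₀))
  have hbound : ∀ s ∈ Metric.ball t₀ δ ∩ S, ‖F' x s - F' x t₀‖ ≤ ε := fun s hs =>
    dist_eq_norm (F' x s) (F' x t₀) ▸ le_of_lt (hF'_near s (hball hs) x hx)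
  calc ‖F x t - F x t₀ - (t - t₀) • F' x t₀‖
      = ‖(F x t - t • F' x t₀) - (F x t₀ - t₀ • F' x t₀)‖ := by
        rw [sub_smul]; congr 1; abel
    _ ≤ ε * ‖t - t₀‖ := hconvex.norm_image_sub_le_of_norm_hasDerivWithin_le hderiv hbound
        ⟨Metric.mem_ball_self hδ, ht₀⟩ ht

theorem hasDerivWithinAt_intervalIntegral_of_continuousOn {a b : ℝ} {F F' : ℝ → ℝ → E}
    (hS : Convex ℝ S) (ht₀ : t₀ ∈ S)
    (hF_int : ∀ t ∈ S, IntervalIntegrable (fun x => F x t) volume a b)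
    (hF : ∀ x ∈ Set.uIcc a b, ∀ t ∈ S, HasDerivWithinAt (F x) (F' x t) S t)
    (hF' : ContinuousOn (fun p : ℝ × ℝ => F' p.1 p.2) (Set.uIcc a b ×ˢ S)) :
    HasDerivWithinAt (fun t => ∫ x in a..b, F x t) (∫ x in a..b, F' x t₀) S t₀ := by
  have hF'_int : IntervalIntegrable (fun x => F' x t₀) volume a b :=
    (hF'.comp (Continuous.prodMk_left t₀).continuousOn
      fun _ hx => ⟨hx, ht₀⟩).intervalIntegrable
  rw [hasDerivWithinAt_iff_isLittleO, Asymptotics.isLittleO_iff]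
  intro ε hε
  have hlength : 0 < |b - a| + 1 := by positivity
  filter_upwards [self_mem_nhdsWithin, eventually_forall_norm_sub_sub_smul_le_of_isCompact
    isCompact_uIcc hS ht₀ hF hF' (div_pos hε hlength)] with t ht hclose
  have hlinear_int : IntervalIntegrable (fun x => (t - t₀) • F' x t₀) volume a b :=
    hF'_int.smul (t - t₀)
  calc ‖(∫ x in a..b, F x t) - (∫ x in a..b, F x t₀) - (t - t₀) • ∫ x in a..b, F' x t₀‖
      = ‖∫ x in a..b, (F x t - F x t₀ - (t - t₀) • F' x t₀)‖ := by
        rw [← intervalIntegral.integral_smul, ← integral_sub (hF_int t ht) (hF_int t₀ ht₀),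
          ← integral_sub ((hF_int t ht).sub (hF_int t₀ ht₀)) hlinear_int]
    _ ≤ ε / (|b - a| + 1) * ‖t - t₀‖ * |b - a| :=
        norm_integral_le_of_norm_le_const fun x hx => hclose x (Set.uIoc_subset_uIcc hx)
    _ = |b - a| / (|b - a| + 1) * (ε * ‖t - t₀‖) := by ring
    _ ≤ ε * ‖t - t₀‖ :=
        mul_le_of_le_one_left (by positivity) ((div_le_one hlength).2 (lt_add_one _).le)

end Calculus

theorem pInv_eq_sub_integral_of_hasDerivAt {f F : ℝ → ℝ} (hf : Continuous f)
    (hF : ∀ x, HasDerivAt F (f x) x) (x : ℝ) : pInv f x = F x - ∫ y in (0 : ℝ)..1, F y := by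
  have ftc : ∀ y, ∫ s in (0 : ℝ)..y, f s = F y - F 0 := fun y =>
    integral_eq_sub_of_hasDerivAt (fun s _ => hF s) (hf.intervalIntegrable 0 y)
  have hF_cont : Continuous F := continuous_iff_continuousAt.2 fun y => (hF y).continuousAt
  simp only [pInv, ftc]
  rw [integral_sub (hF_cont.intervalIntegrable 0 1) intervalIntegrable_const,
    intervalIntegral.integral_const, sub_zero, one_smul, sub_sub_sub_cancel_right]

theorem K1_eq_sub_mul_of_hasDerivAt {v w : ℝ → ℝ} (hv : Continuous v)
    (hw : ∀ x, HasDerivAt w (sin (v x)) x) :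
    K1 v = (∫ x in (0 : ℝ)..1, cos (v x) * w x)
      - (∫ x in (0 : ℝ)..1, cos (v x)) * ∫ x in (0 : ℝ)..1, w x := by
  have hw_cont : Continuous w := continuous_iff_continuousAt.2 fun x => (hw x).continuousAt
  have hcos : Continuous fun x => cos (v x) := continuous_cos.comp hv
  simp only [K1, pInv_eq_sub_integral_of_hasDerivAt (continuous_sin.comp' hv) hw, mul_sub]
  rw [integral_sub ((hcos.fun_mul hw_cont).intervalIntegrable 0 1)
    ((hcos.fun_mul continuous_const).intervalIntegrable 0 1), intervalIntegral.integral_mul_const]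

section SineGordon

variable {u ut : ℝ → ℝ → ℝ} {S : Set ℝ} {c t : ℝ}

theorem integral_sin_eq_zero (hS : UniqueDiffWithinAt ℝ S t) (ht : t ∈ S)
    (hu : Continuous fun x => u x t) (hut : ∀ x, HasDerivWithinAt (u x) (ut x t) S t)
    (hutx : ∀ x, HasDerivAt (fun y => ut y t) (sin (u x t)) x)
    (hshift : ∀ s ∈ S, u 1 s = u 0 s + c) :
    ∫ x in (0 : ℝ)..1, sin (u x t) = 0 := by
  rw [integral_eq_sub_of_hasDerivAt (fun x _ => hutx x)
      ((continuous_sin.comp hu).intervalIntegrable 0 1),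
    hasDerivWithinAt_unique_of_eq_add_const hS ht (hut 1) (hut 0) hshift, sub_self]

theorem integral_cos_mul_timeDeriv_eq_zero (hS : Convex ℝ S)
    (hS_unique : UniqueDiffOn ℝ S) (ht : t ∈ S)
    (hu : ContinuousOn (fun p : ℝ × ℝ => u p.1 p.2) (Set.univ ×ˢ S))
    (hut : ∀ x, ∀ s ∈ S, HasDerivWithinAt (u x) (ut x s) S s)
    (hut_cont : ContinuousOn (fun p : ℝ × ℝ => ut p.1 p.2) (Set.univ ×ˢ S))
    (hutx : ∀ x, ∀ s ∈ S, HasDerivAt (fun y => ut y s) (sin (u x s)) x)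
    (hshift : ∀ s ∈ S, u 1 s = u 0 s + c) :
    ∫ x in (0 : ℝ)..1, cos (u x t) * ut x t = 0 := by
  have hu_slice : ∀ s ∈ S, Continuous fun x => u x s := fun s hs =>
    hu.comp_continuous (.prodMk_left s) fun _ => ⟨trivial, hs⟩
  have hderiv : HasDerivWithinAt (fun s => ∫ x in (0 : ℝ)..1, sin (u x s))
      (∫ x in (0 : ℝ)..1, cos (u x t) * ut x t) S t :=
    hasDerivWithinAt_intervalIntegral_of_continuousOn hS ht
      (fun s hs => (continuous_sin.comp (hu_slice s hs)).intervalIntegrable 0 1)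
      (fun x _ s hs => (hut x s hs).sin)
      (((continuous_cos.comp_continuousOn hu).mul hut_cont).mono
        (Set.prod_mono_left (Set.subset_univ _)))
  have hmean : ∀ s ∈ S, ∫ x in (0 : ℝ)..1, sin (u x s) = 0 := fun s hs =>
    integral_sin_eq_zero (hS_unique s hs) hs (hu_slice s hs) (hut · s hs) (hutx · s hs) hshift
  exact (hS_unique t ht).eq_deriv S hderiv ((hasDerivWithinAt_const t S 0).congr hmean (hmean t ht))

theorem necessary_condition_on_Sing_general (hS : Convex ℝ S)
    (hS_unique : UniqueDiffOn ℝ S) (ht : t ∈ S)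
    (hu : ContinuousOn (fun p : ℝ × ℝ => u p.1 p.2) (Set.univ ×ˢ S))
    (hut : ∀ x, ∀ s ∈ S, HasDerivWithinAt (u x) (ut x s) S s)
    (hut_cont : ContinuousOn (fun p : ℝ × ℝ => ut p.1 p.2) (Set.univ ×ˢ S))
    (hutx : ∀ x, ∀ s ∈ S, HasDerivAt (fun y => ut y s) (sin (u x s)) x)
    (hshift : ∀ s ∈ S, u 1 s = u 0 s + c) :
    K1 (fun x => u x t) = -((∫ x in (0 : ℝ)..1, cos (u x t)) * ∫ x in (0 : ℝ)..1, ut x t) := by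
  have hu_slice : Continuous fun x => u x t :=
    hu.comp_continuous (.prodMk_left t) fun _ => ⟨trivial, ht⟩
  rw [K1_eq_sub_mul_of_hasDerivAt hu_slice (hutx · t ht),
    integral_cos_mul_timeDeriv_eq_zero hS hS_unique ht hu hut hut_cont hutx hshift, zero_sub]

end SineGordon

/-- if `u` is a classical charge-`k` solution of sine-Gordon on `ℝ × [0,T)`
with initial datum `u₀ = u(·,0)` satisfying `∫₀¹ cos (u₀ x) dx = 0`, then `K₁(u₀) = 0`. -/
theorem necessary_condition_on_Sing (k : ℤ) (T : ℝ) (hT : 0 < T) (u : ℝ → ℝ → ℝ)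
    (hsol : IsSGSolution k T u)
    (hcos : (∫ x in (0:ℝ)..1, Real.cos (u x 0)) = 0) :
    K1 (fun x => u x 0) = 0 := by
  obtain ⟨ux, ut, uxt, utx, hu, -, -, hut, hut_cont, huxt, -, -, -, -, hper, heq⟩ := hsol
  rw [necessary_condition_on_Sing_general (convex_Ico 0 T) (uniqueDiffOn_Ico 0 T) ⟨le_rfl, hT⟩ hu
    hut hut_cont (fun x t ht => heq x t ht ▸ huxt x t ht)
    (fun t ht => zero_add (1 : ℝ) ▸ hper 0 t ht), hcos, zero_mul, neg_zero]
end

section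
/- For every k ∈ ℤ there exists an infinitely differentiable function u₀: ℝ → ℝ of topological charge k such that ∫₀¹ exp(i u₀(x)) dx = 0 (in particular ∫₀¹ sin(u₀) = 0 and ∫₀¹ cos(u₀) = 0) and K₁(u₀) ≠ 0. -/
open MeasureTheory Real intervalIntegral

/-!
If `e^{iu}` is the velocity of a closed curve `γ`, then `∫₀¹ e^{iu} = 0`, and integrating by parts
gives `K₁(u) = -A`, where `A` is the signed area enclosed by `γ`. So it suffices to find, for every
turning number `k`, a closed unit-speed curve whose signed area does not vanish.

For `k ≠ 0` take a circle run `k` times. For `k = 0` the curve has to be a lopsided figure eight.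
With `z = e^{2πix}` let `e^{iu} = ((1 - a/z) / (1 - az))²` for a real `a` with `|a| < 1`, so that
`u` winds zero times; the mean of `e^{iu}` is `(1 - a²)(1 - 3a²)`, hence the curve closes up
exactly when `3a² = 1`. On the unit circle conjugation is `z ↦ z⁻¹`, which makes the area integrand
a multiple of `z⁻¹ G(z)` with `G` holomorphic on the closed disc, and Cauchy's formula evaluates the
area through the derivative of `G` at `0`.
-/

open scoped ComplexConjugate ContDiff

/-- `γ` is a closed plane curve of length `1`, parametrised by arc length, with tangent angle `u`:
its velocity is `e^{iu}`. -/
structure IsUnitSpeedLoop (u : ℝ → ℝ) (γ : ℝ → ℂ) : Prop where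
  hasDerivAt : ∀ x, HasDerivAt γ (Complex.exp (u x * Complex.I)) x
  closed : γ 1 = γ 0

/-- The signed area `½ Im ∫₀¹ γ̄ γ'` enclosed by a closed plane curve, positive when the curve runs
counterclockwise. -/
noncomputable def signedArea (γ : ℝ → ℂ) : ℝ :=
  (∫ x in (0:ℝ)..1, conj (γ x) * deriv γ x).im / 2

namespace IsUnitSpeedLoop

variable {u : ℝ → ℝ} {γ : ℝ → ℂ}

theorem hasDerivAt_re (h : IsUnitSpeedLoop u γ) (x : ℝ) :
    HasDerivAt (fun x => (γ x).re) (cos (u x)) x := by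
  simpa [Complex.exp_ofReal_mul_I_re, Function.comp_def] using
    Complex.reCLM.hasFDerivAt.comp_hasDerivAt x (h.hasDerivAt x)

theorem hasDerivAt_im (h : IsUnitSpeedLoop u γ) (x : ℝ) :
    HasDerivAt (fun x => (γ x).im) (sin (u x)) x := by
  simpa [Complex.exp_ofReal_mul_I_im, Function.comp_def] using
    Complex.imCLM.hasFDerivAt.comp_hasDerivAt x (h.hasDerivAt x)

theorem continuous (h : IsUnitSpeedLoop u γ) : Continuous γ :=
  continuous_iff_continuousAt.2 fun x => (h.hasDerivAt x).continuousAt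

theorem integral_exp_eq_zero (h : IsUnitSpeedLoop u γ) (hu : Continuous u) :
    ∫ x in (0:ℝ)..1, Complex.exp (u x * Complex.I) = 0 := by
  rw [integral_eq_sub_of_hasDerivAt (fun x _ => h.hasDerivAt x)
    (Continuous.intervalIntegrable (by fun_prop) _ _), h.closed, sub_self]

theorem integral_cos_eq_zero (h : IsUnitSpeedLoop u γ) (hu : Continuous u) :
    ∫ x in (0:ℝ)..1, cos (u x) = 0 := by
  rw [integral_eq_sub_of_hasDerivAt (fun x _ => h.hasDerivAt_re x)
    (Continuous.intervalIntegrable (by fun_prop) _ _), h.closed, sub_self]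

theorem integral_sin (h : IsUnitSpeedLoop u γ) (hu : Continuous u) (x : ℝ) :
    ∫ s in (0:ℝ)..x, sin (u s) = (γ x).im - (γ 0).im :=
  integral_eq_sub_of_hasDerivAt (fun x _ => h.hasDerivAt_im x)
    (Continuous.intervalIntegrable (by fun_prop) _ _)

theorem integral_sin_eq_zero (h : IsUnitSpeedLoop u γ) (hu : Continuous u) :
    ∫ x in (0:ℝ)..1, sin (u x) = 0 := by
  rw [h.integral_sin hu, h.closed, sub_self]

theorem K1_eq_integral_cos_mul_im (h : IsUnitSpeedLoop u γ) (hu : Continuous u) :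
    K1 u = ∫ x in (0:ℝ)..1, cos (u x) * (γ x).im := by
  have hγ := h.continuous
  obtain ⟨m, hm⟩ : ∃ m, ∀ x, pInv (fun y => sin (u y)) x = (γ x).im - m :=
    ⟨(γ 0).im + ∫ y in (0:ℝ)..1, ∫ s in (0:ℝ)..y, sin (u s), fun x => by
      rw [pInv, h.integral_sin hu, sub_sub]⟩
  simp only [K1, hm, mul_sub]
  rw [integral_sub (Continuous.intervalIntegrable (by fun_prop) _ _)
    (Continuous.intervalIntegrable (by fun_prop) _ _), intervalIntegral.integral_mul_const,
    h.integral_cos_eq_zero hu, zero_mul, sub_zero]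

theorem integral_re_mul_sin (h : IsUnitSpeedLoop u γ) (hu : Continuous u) :
    ∫ x in (0:ℝ)..1, (γ x).re * sin (u x) = -∫ x in (0:ℝ)..1, cos (u x) * (γ x).im := by
  rw [integral_mul_deriv_eq_deriv_mul (fun x _ => h.hasDerivAt_re x) (fun x _ => h.hasDerivAt_im x)
    (Continuous.intervalIntegrable (by fun_prop) _ _)
    (Continuous.intervalIntegrable (by fun_prop) _ _), h.closed, sub_self, zero_sub]

theorem K1_eq_neg_signedArea (h : IsUnitSpeedLoop u γ) (hu : Continuous u) :
    K1 u = -signedArea γ := by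
  have hγ := h.continuous
  have him : (∫ x in (0:ℝ)..1, conj (γ x) * deriv γ x).im =
      ∫ x in (0:ℝ)..1, ((γ x).re * sin (u x) - cos (u x) * (γ x).im) := by
    simp only [(h.hasDerivAt _).deriv]
    rw [← Complex.imCLM_apply, ← Complex.imCLM.intervalIntegral_comp_comm
      (Continuous.intervalIntegrable (by fun_prop) _ _)]
    refine integral_congr fun x _ => ?_
    simp only [Complex.imCLM_apply, Complex.mul_im, Complex.conj_re, Complex.exp_ofReal_mul_I_im,
      Complex.conj_im, Complex.exp_ofReal_mul_I_re, neg_mul]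
    ring
  rw [signedArea, him, integral_sub (Continuous.intervalIntegrable (by fun_prop) _ _)
    (Continuous.intervalIntegrable (by fun_prop) _ _), h.integral_re_mul_sin hu,
    h.K1_eq_integral_cos_mul_im hu]
  ring

end IsUnitSpeedLoop

section CircleAverage

variable {E : Type*} [NormedAddCommGroup E]

theorem integral_circleMap_two_pi_mul [NormedSpace ℝ E] (f : ℂ → E) (c : ℂ) (R : ℝ) :
    ∫ x in (0:ℝ)..1, f (circleMap c R (2 * π * x)) = circleAverage f c R := by
  rw [integral_comp_mul_left (fun θ => f (circleMap c R θ)) two_pi_pos.ne', mul_zero, mul_one,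
    circleAverage_def]

theorem circleAverage_sub_center_inv_smul_eq_deriv [NormedSpace ℂ E] [CompleteSpace E]
    {f : ℂ → E} {c : ℂ} {R : ℝ} (hR : 0 < R) (hf : DiffContOnCl ℂ f (Metric.ball c R)) :
    circleAverage (fun z => (z - c)⁻¹ • f z) c R = deriv f c := by
  rw [circleAverage_eq_circleIntegral hR.ne', inv_smul_eq_iff₀ Complex.two_pi_I_ne_zero,
    ← hf.deriv_eq_smul_circleIntegral hR]
  simp only [smul_smul, ← sq, one_div, inv_pow]

end CircleAverage

/-- The parametrisation `e^{2πix}` of the unit circle, of period `1`. -/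
noncomputable def circleParam (x : ℝ) : ℂ :=
  circleMap 0 1 (2 * π * x)

theorem exp_two_pi_mul_mul_I (x : ℝ) :
    Complex.exp ((2 * π * x : ℝ) * Complex.I) = circleParam x := by
  simp [circleParam, circleMap_zero]

theorem norm_circleParam (x : ℝ) : ‖circleParam x‖ = 1 := by
  simp [circleParam]

theorem circleParam_ne_zero (x : ℝ) : circleParam x ≠ 0 :=
  norm_ne_zero_iff.1 (by simp [norm_circleParam])

theorem conj_circleParam (x : ℝ) : conj (circleParam x) = (circleParam x)⁻¹ :=
  (Complex.inv_eq_conj (norm_circleParam x)).symm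

theorem circleParam_periodic : Function.Periodic circleParam 1 := fun x => by
  rw [circleParam, mul_add, mul_one, periodic_circleMap, circleParam]

theorem contDiff_circleParam {n : WithTop ℕ∞} : ContDiff ℝ n circleParam :=
  (contDiff_circleMap 0 1).comp (by fun_prop)

theorem hasDerivAt_circleParam (x : ℝ) :
    HasDerivAt circleParam (2 * π * Complex.I * circleParam x) x := by
  have h := (hasDerivAt_circleMap 0 1 (2 * π * x)).scomp x ((hasDerivAt_id x).const_mul (2 * π))
  refine h.congr_deriv ?_
  simp only [mul_one, Complex.real_smul, Complex.ofReal_mul, Complex.ofReal_ofNat, circleParam]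
  ring

/-- The circle of length `1 / |k|` run `|k|` times, counterclockwise if and only if `k > 0`. -/
noncomputable def circleLoop (k : ℤ) (x : ℝ) : ℂ :=
  circleParam (k * x) / (2 * π * k * Complex.I)

theorem isUnitSpeedLoop_circleLoop {k : ℤ} (hk : k ≠ 0) :
    IsUnitSpeedLoop (fun x => 2 * π * (k * x)) (circleLoop k) where
  hasDerivAt x := by
    have h := (hasDerivAt_circleParam (k * x)).scomp x ((hasDerivAt_id x).const_mul (k : ℝ))
    refine (h.div_const (2 * π * k * Complex.I)).congr_deriv ?_
    rw [exp_two_pi_mul_mul_I]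
    simp only [mul_one, Complex.real_smul, Complex.ofReal_intCast]
    field_simp
  closed := by
    rw [circleLoop, circleLoop, circleParam_periodic.int_mul_eq, mul_zero]

theorem conj_circleLoop_mul_deriv {k : ℤ} (hk : k ≠ 0) (x : ℝ) :
    conj (circleLoop k x) * deriv (circleLoop k) x = (1 / (2 * π * k) : ℝ) * Complex.I := by
  have hz := circleParam_ne_zero (k * x)
  rw [((isUnitSpeedLoop_circleLoop hk).hasDerivAt x).deriv, exp_two_pi_mul_mul_I, circleLoop,
    map_div₀, conj_circleParam]
  simp only [map_mul, map_ofNat, Complex.conj_ofReal, map_intCast, Complex.conj_I]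
  push_cast
  field_simp
  simp

theorem signedArea_circleLoop {k : ℤ} (hk : k ≠ 0) :
    signedArea (circleLoop k) = 1 / (4 * π * k) := by
  simp only [signedArea, conj_circleLoop_mul_deriv hk]
  rw [intervalIntegral.integral_const, sub_zero, one_smul, Complex.im_ofReal_mul, Complex.I_im]
  ring

theorem one_sub_mul_ne_zero_of_norm_lt_one {R : Type*} [SeminormedRing R] [NormOneClass R]
    {a z : R} (ha : ‖a‖ < 1) (hz : ‖z‖ ≤ 1) : 1 - a * z ≠ 0 := by
  refine sub_ne_zero.2 fun h => ?_
  have hnorm : ‖a * z‖ < 1 :=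
    (norm_mul_le a z).trans_lt (mul_lt_one_of_nonneg_of_lt_one_left (norm_nonneg a) ha hz)
  rw [← h, norm_one] at hnorm
  exact lt_irrefl 1 hnorm

theorem exp_two_mul_arg_mul_I {w : ℂ} (hw : w ≠ 0) :
    Complex.exp (2 * w.arg * Complex.I) = w / conj w := by
  have hconj : conj w = ‖w‖ * Complex.exp (-(w.arg * Complex.I)) := by
    conv_lhs => rw [← w.norm_mul_exp_arg_mul_I, map_mul, ← Complex.exp_conj]
    simp
  rw [eq_div_iff (by simpa using hw), hconj]
  nth_rw 4 [← w.norm_mul_exp_arg_mul_I]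
  rw [mul_left_comm, ← Complex.exp_add]
  ring_nf

/-- The tangent angle of the figure eight: `e^{iu} = ((1 - a/z) / (1 - az))²` at `z = e^{2πix}`.
For `|a| < 1` the number `1 - a/z` has positive real part, so its argument does not jump. -/
noncomputable def eightAngle (a x : ℝ) : ℝ :=
  4 * (1 - a * (circleParam x)⁻¹).arg

theorem eightAngle_periodic (a : ℝ) : Function.Periodic (eightAngle a) 1 :=
  circleParam_periodic.comp fun z => 4 * (1 - a * z⁻¹).arg

theorem contDiff_eightAngle {a : ℝ} (ha : |a| < 1) {n : WithTop ℕ∞} :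
    ContDiff ℝ n (eightAngle a) := by
  have hslit (x : ℝ) : 1 - a * (circleParam x)⁻¹ ∈ Complex.slitPlane := by
    rw [sub_eq_add_neg]
    apply Complex.mem_slitPlane_of_norm_lt_one
    simpa [norm_circleParam] using ha
  have hlog : ContDiff ℝ n fun x => Complex.log (1 - a * (circleParam x)⁻¹) :=
    contDiff_iff_contDiffAt.2 fun x =>
      ((Complex.contDiffAt_log (hslit x)).restrict_scalars ℝ).comp x
        (contDiff_const.sub (contDiff_const.mul
          (contDiff_circleParam.inv circleParam_ne_zero))).contDiffAt
  have harg : ContDiff ℝ n fun x => (1 - a * (circleParam x)⁻¹).arg := by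
    simpa [Function.comp_def, Complex.log_im] using Complex.imCLM.contDiff.comp hlog
  exact contDiff_const.mul harg

theorem exp_eightAngle_mul_I {a : ℝ} (ha : |a| < 1) (x : ℝ) :
    Complex.exp (eightAngle a x * Complex.I) =
      ((1 - a * (circleParam x)⁻¹) / (1 - a * circleParam x)) ^ 2 := by
  have hw : 1 - a * (circleParam x)⁻¹ ≠ 0 :=
    one_sub_mul_ne_zero_of_norm_lt_one (by simpa using ha) (by simp [norm_circleParam])
  have hconj : conj (1 - a * (circleParam x)⁻¹) = 1 - a * circleParam x := by
    simp [conj_circleParam]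
  rw [← hconj, ← exp_two_mul_arg_mul_I hw, ← Complex.exp_nat_mul, eightAngle]
  push_cast
  ring_nf

theorem norm_lt_one_of_three_mul_sq_eq_one {𝕜 : Type*} [RCLike 𝕜] {a : 𝕜} (ha : 3 * a ^ 2 = 1) :
    ‖a‖ < 1 := by
  have hnorm : 3 * ‖a‖ ^ 2 = 1 := by simpa using congr_arg norm ha
  exact (sq_lt_one_iff₀ (norm_nonneg a)).1 (by linarith)

/-- The partial fraction decomposition of a primitive of `z⁻¹ ((1 - a/z) / (1 - az))²`. Its
coefficients are simplified by `3a² = 1`, without which there are also logarithmic terms. -/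
noncomputable def eightPrimitive (a z : ℂ) : ℂ :=
  4 / 9 * (1 - a * z)⁻¹ + 4 / 3 * a * z⁻¹ - 1 / 6 * (z ^ 2)⁻¹

theorem hasDerivAt_eightPrimitive {a z : ℂ} (ha : 3 * a ^ 2 = 1) (hz : z ≠ 0)
    (haz : 1 - a * z ≠ 0) :
    HasDerivAt (eightPrimitive a) (z⁻¹ * ((1 - a * z⁻¹) / (1 - a * z)) ^ 2) z := by
  have hpole : HasDerivAt (fun z => 1 - a * z) (-a) z := by
    simpa using ((hasDerivAt_id z).const_mul a).const_sub 1
  refine (((hpole.inv haz).const_mul (4 / 9)).add ((hasDerivAt_inv hz).const_mul (4 / 3 * a))).sub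
    (((hasDerivAt_pow 2 z).inv (pow_ne_zero 2 hz)).const_mul (1 / 6)) |>.congr_deriv ?_
  field_simp
  simp only [Nat.cast_ofNat, Nat.add_one_sub_one, pow_one, sub_neg_eq_add]
  linear_combination 54 * z * (3 * z ^ 2 - 1 - 4 / 3 * a * z ^ 3) * ha

theorem conj_eightPrimitive_circleParam (a x : ℝ) :
    conj (eightPrimitive a (circleParam x)) = eightPrimitive a (circleParam x)⁻¹ := by
  simp [eightPrimitive, conj_circleParam, map_ofNat]

/-- The figure eight with tangent angle `eightAngle a`, which closes up when `3a² = 1`. -/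
noncomputable def eightLoop (a x : ℝ) : ℂ :=
  eightPrimitive a (circleParam x) / (2 * π * Complex.I)

theorem isUnitSpeedLoop_eightLoop {a : ℝ} (ha : 3 * a ^ 2 = 1) :
    IsUnitSpeedLoop (eightAngle a) (eightLoop a) where
  hasDerivAt x := by
    have ha1 := norm_lt_one_of_three_mul_sq_eq_one ha
    have hz := circleParam_ne_zero x
    have haz : 1 - a * circleParam x ≠ 0 :=
      one_sub_mul_ne_zero_of_norm_lt_one (by simpa using ha1) (norm_circleParam x).le
    have hF := hasDerivAt_eightPrimitive (a := a) (by exact_mod_cast ha) hz haz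
    refine ((hF.comp x (hasDerivAt_circleParam x)).div_const _).congr_deriv ?_
    rw [exp_eightAngle_mul_I ha1]
    field_simp
  closed := by
    rw [eightLoop, circleParam_periodic.eq, eightLoop]

/-- The function `G`, holomorphic on the closed unit disc, for which the area integrand of
`eightLoop a` is a constant multiple of `z⁻¹ G(z)` at `z = e^{2πix}`. -/
noncomputable def eightAreaDensity (a z : ℂ) : ℂ :=
  (z - a) * (4 / 9 + (z - a) * (4 / 3 * a - 1 / 6 * z)) / (1 - a * z) ^ 2

theorem eightPrimitive_inv_mul {a z : ℂ} (hz : z ≠ 0) (hza : z - a ≠ 0) :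
    eightPrimitive a z⁻¹ * ((1 - a * z⁻¹) / (1 - a * z)) ^ 2 = z⁻¹ * eightAreaDensity a z := by
  have h : 1 - a * z⁻¹ = (z - a) / z := by field_simp
  rw [eightPrimitive, eightAreaDensity, h]
  by_cases haz : 1 - a * z = 0
  · simp [haz]
  field_simp
  ring

theorem conj_eightLoop_mul_deriv {a : ℝ} (ha : 3 * a ^ 2 = 1) (x : ℝ) :
    conj (eightLoop a x) * deriv (eightLoop a) x =
      Complex.I / (2 * π) * ((circleParam x)⁻¹ * eightAreaDensity a (circleParam x)) := by
  have ha1 := norm_lt_one_of_three_mul_sq_eq_one ha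
  have hza : circleParam x - a ≠ 0 := sub_ne_zero.2 fun h => by
    have hnorm : ‖(a : ℂ)‖ < 1 := by simpa using ha1
    rw [← h, norm_circleParam] at hnorm
    exact lt_irrefl 1 hnorm
  rw [((isUnitSpeedLoop_eightLoop ha).hasDerivAt x).deriv, exp_eightAngle_mul_I ha1,
    ← eightPrimitive_inv_mul (circleParam_ne_zero x) hza, ← conj_eightPrimitive_circleParam,
    eightLoop]
  simp only [map_div₀, map_mul, map_ofNat, Complex.conj_ofReal, Complex.conj_I, mul_neg]
  field_simp
  simp only [Complex.I_sq]
  ring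

theorem diffContOnCl_eightAreaDensity {a : ℂ} (ha : ‖a‖ < 1) :
    DiffContOnCl ℂ (eightAreaDensity a) (Metric.ball 0 1) := by
  refine DifferentiableOn.diffContOnCl fun z hz => ?_
  have haz : 1 - a * z ≠ 0 :=
    one_sub_mul_ne_zero_of_norm_lt_one ha (by simpa [closure_ball] using hz)
  unfold eightAreaDensity
  fun_prop (disch := simpa using haz)

theorem deriv_eightAreaDensity_zero {a : ℂ} (ha : 3 * a ^ 2 = 1) :
    deriv (eightAreaDensity a) 0 = -1 / 2 := by
  have hlin (b c : ℂ) : HasDerivAt (fun z => b - c * z) (-c) 0 := by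
    simpa using ((hasDerivAt_id 0).const_mul c).const_sub b
  have hza : HasDerivAt (fun z => z - a) 1 0 := (hasDerivAt_id 0).sub_const a
  have h := (hza.mul ((hza.mul (hlin (4 / 3 * a) (1 / 6))).const_add (4 / 9))).div
    ((hlin 1 a).pow 2) (by simp)
  refine (h.congr_deriv ?_).deriv
  simp only [one_div, Pi.mul_apply, zero_sub, mul_zero, sub_zero, neg_mul, one_mul, mul_neg,
    neg_neg, Pi.pow_apply, one_pow, mul_one, Nat.cast_ofNat, Nat.add_one_sub_one, div_one]
  linear_combination (8 / 9 * a ^ 2 - 17 / 18) * ha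

theorem integral_circleParam_inv_mul_eightAreaDensity {a : ℂ} (ha : 3 * a ^ 2 = 1) :
    ∫ x in (0:ℝ)..1, (circleParam x)⁻¹ * eightAreaDensity a (circleParam x) = -1 / 2 := by
  rw [← deriv_eightAreaDensity_zero ha,
    ← circleAverage_sub_center_inv_smul_eq_deriv one_pos
      (diffContOnCl_eightAreaDensity (norm_lt_one_of_three_mul_sq_eq_one ha)),
    ← integral_circleMap_two_pi_mul]
  simp only [circleParam, sub_zero, smul_eq_mul]

theorem signedArea_eightLoop {a : ℝ} (ha : 3 * a ^ 2 = 1) :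
    signedArea (eightLoop a) = -1 / (8 * π) := by
  have hval : Complex.I / (2 * π) * (-1 / 2) = (-1 / (4 * π) : ℝ) * Complex.I := by
    push_cast
    ring
  simp only [signedArea, conj_eightLoop_mul_deriv ha]
  rw [intervalIntegral.integral_const_mul,
    integral_circleParam_inv_mul_eightAreaDensity (by exact_mod_cast ha), hval,
    Complex.im_ofReal_mul, Complex.I_im]
  ring

theorem exists_isUnitSpeedLoop_signedArea_ne_zero (k : ℤ) :
    ∃ (u : ℝ → ℝ) (γ : ℝ → ℂ), ContDiff ℝ ω u ∧ (∀ x, u (x + 1) = u x + 2 * π * k) ∧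
      IsUnitSpeedLoop u γ ∧ signedArea γ ≠ 0 := by
  rcases eq_or_ne k 0 with rfl | hk
  · obtain ⟨a, ha⟩ : ∃ a : ℝ, 3 * a ^ 2 = 1 := ⟨√(1 / 3), by norm_num⟩
    refine ⟨eightAngle a, eightLoop a, contDiff_eightAngle (norm_lt_one_of_three_mul_sq_eq_one ha),
      fun x => ?_, isUnitSpeedLoop_eightLoop ha, ?_⟩
    · simp [eightAngle_periodic a x]
    · simp [signedArea_eightLoop ha, pi_ne_zero]
  · refine ⟨fun x => 2 * π * (k * x), circleLoop k, by fun_prop, fun x => by ring,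
      isUnitSpeedLoop_circleLoop hk, ?_⟩
    simp [signedArea_circleLoop hk, pi_ne_zero, hk]

/-- for every `k ∈ ℤ` there is a C^∞ function `u₀` of topological charge
`k` with `∫₀¹ exp(i u₀ x) dx = 0` (hence `∫₀¹ sin u₀ = 0` and `∫₀¹ cos u₀ = 0`)
and `K₁(u₀) ≠ 0`. -/
theorem exists_smooth_bad_initial_datum (k : ℤ) :
    ∃ u₀ : ℝ → ℝ, ContDiff ℝ (⊤ : ℕ∞) u₀ ∧
      (∀ x, u₀ (x + 1) = u₀ x + 2 * π * k) ∧
      (∫ x in (0:ℝ)..1, Complex.exp ((u₀ x : ℂ) * Complex.I)) = 0 ∧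
      (∫ x in (0:ℝ)..1, Real.sin (u₀ x)) = 0 ∧
      (∫ x in (0:ℝ)..1, Real.cos (u₀ x)) = 0 ∧
      K1 u₀ ≠ 0 := by
  obtain ⟨u, γ, hu, hcharge, hloop, harea⟩ := exists_isUnitSpeedLoop_signedArea_ne_zero k
  have hcont := hu.continuous
  refine ⟨u, hu.of_le le_top, hcharge, hloop.integral_exp_eq_zero hcont,
    hloop.integral_sin_eq_zero hcont, hloop.integral_cos_eq_zero hcont, ?_⟩
  rwa [hloop.K1_eq_neg_signedArea hcont, neg_ne_zero]
end
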